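/- arXiv:2104.11910 — 2 statements merged into one kernel-verified Lean document; each statement's English description precedes it below -/
import Mathlib

section
/- For every finite simple graph G and every k ≥ 2, the increments of the sequence (ϑ_k(G))_k are decreasing: ϑ_{k+1}(G) − ϑ_k(G) ≤ ϑ_k(G) − ϑ_{k−1}(G). In addition, ϑ_2(G) − ϑ_1(G) ≤ ϑ_1(G). -/
open Finset

/-- The sum of the `k` largest eigenvalues (counted with multiplicity) of a
Hermitian real matrix, realized as the supremum over all choices of
`min k n` eigenvalues of their sum. -/
noncomputable def sumKEig {V : Type*} [Fintype V] [DecidableEq V] (k : ℕ)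
    (A : Matrix V V ℝ) (hA : A.IsHermitian) : ℝ :=
  sSup {x : ℝ | ∃ s : Finset V, s.card = min k (Fintype.card V) ∧
    x = ∑ i ∈ s, hA.eigenvalues i}

/-- The generalized theta number `ϑ_k(G)`: the infimum of the sum of the `k`
largest eigenvalues over all real symmetric matrices `A` with `A i j = 1`
whenever `(i,j)` is not an edge of `G`. -/
noncomputable def gtheta {V : Type*} [Fintype V] [DecidableEq V]
    (k : ℕ) (G : SimpleGraph V) : ℝ :=
  sInf {x : ℝ | ∃ (A : Matrix V V ℝ) (hA : A.IsHermitian),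
    (∀ i j, ¬ G.Adj i j → A i j = 1) ∧ x = sumKEig k A hA}

/-!
Moving one element from an optimal `(k + 2)`-set of eigenvalues to an optimal `k`-set not
containing it leaves two `(k + 1)`-sets, so `k ↦ S_k(A)` is concave for `k` up to the size `n` of
`A`, and an infimum of concave functions is concave. From `n` on, the sequence `ϑ_k(G)` is constant
equal to `n`, the common trace of all matrices in `𝒜(G)`. Concavity persists at `n`, where it can
fail for an individual `S_k(A)`, because `ϑ_k(G) ≤ n` for every `k`, as witnessed by the all-ones
matrix, which is positive semidefinite.
-/

section SumLargest

variable {ι : Type*} [Fintype ι] {k : ℕ} {f : ι → ℝ}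

/-- The sum of the `k` largest values of a finite real family, or of all of them if there are
fewer than `k`. It is encoded as `sumKEig` is, so that `sumKEig k A hA` unfolds to
`sumLargest k hA.eigenvalues`. -/
noncomputable def sumLargest (k : ℕ) (f : ι → ℝ) : ℝ :=
  sSup {x : ℝ | ∃ s : Finset ι, s.card = min k (Fintype.card ι) ∧ x = ∑ i ∈ s, f i}

lemma isGreatest_sumLargest (k : ℕ) (f : ι → ℝ) :
    IsGreatest {x : ℝ | ∃ s : Finset ι, s.card = min k (Fintype.card ι) ∧ x = ∑ i ∈ s, f i}
      (sumLargest k f) := by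
  have hfin : {x : ℝ | ∃ s : Finset ι,
      s.card = min k (Fintype.card ι) ∧ x = ∑ i ∈ s, f i}.Finite := by
    refine (Set.finite_range fun s : Finset ι => ∑ i ∈ s, f i).subset ?_
    rintro x ⟨s, -, rfl⟩
    exact ⟨s, rfl⟩
  obtain ⟨s, -, hs⟩ := exists_subset_card_eq (s := (univ : Finset ι))
    (n := min k (Fintype.card ι)) (min_le_right _ _)
  exact ⟨Set.Nonempty.csSup_mem ⟨_, s, hs, rfl⟩ hfin, fun x hx => le_csSup hfin.bddAbove hx⟩

lemma sum_le_sumLargest {s : Finset ι} (hs : s.card = min k (Fintype.card ι)) :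
    ∑ i ∈ s, f i ≤ sumLargest k f :=
  (isGreatest_sumLargest k f).2 ⟨s, hs, rfl⟩

lemma exists_sumLargest_eq_sum (k : ℕ) (f : ι → ℝ) :
    ∃ s : Finset ι, s.card = min k (Fintype.card ι) ∧ sumLargest k f = ∑ i ∈ s, f i :=
  (isGreatest_sumLargest k f).1

lemma le_of_sumLargest_eq_sum {s : Finset ι} (hs : s.card = min k (Fintype.card ι))
    (hmax : sumLargest k f = ∑ i ∈ s, f i) {i j : ι} (hi : i ∈ s) (hj : j ∉ s) : f j ≤ f i := by
  classical
  have hj' : j ∉ s.erase i := fun h => hj (mem_of_mem_erase h)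
  have hswap : ∑ l ∈ insert j (s.erase i), f l ≤ ∑ l ∈ s, f l :=
    hmax ▸ sum_le_sumLargest (by rw [card_insert_of_notMem hj', card_erase_add_one hi, hs])
  rwa [sum_insert hj', ← add_sum_erase s f hi, add_le_add_iff_right] at hswap

lemma sumLargest_nonneg (hf : 0 ≤ ∑ i, f i) : 0 ≤ sumLargest k f := by
  classical
  obtain ⟨s, hs, hmax⟩ := exists_sumLargest_eq_sum k f
  rw [hmax]
  by_cases hneg : ∃ i ∈ s, f i < 0
  · obtain ⟨i, hi, hfi⟩ := hneg
    have hcompl : ∑ j ∈ sᶜ, f j ≤ 0 := sum_nonpos fun j hj =>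
      (le_of_sumLargest_eq_sum hs hmax hi (mem_compl.1 hj)).trans hfi.le
    linarith [sum_add_sum_compl s f]
  · push Not at hneg
    exact sum_nonneg hneg

lemma sumLargest_zero (f : ι → ℝ) : sumLargest 0 f = 0 := by
  obtain ⟨s, hs, hmax⟩ := exists_sumLargest_eq_sum 0 f
  rw [Nat.zero_min, card_eq_zero] at hs
  rw [hmax, hs, sum_empty]

lemma sumLargest_of_card_le (hk : Fintype.card ι ≤ k) : sumLargest k f = ∑ i, f i := by
  obtain ⟨s, hs, hmax⟩ := exists_sumLargest_eq_sum k f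
  rw [min_eq_right hk, card_eq_iff_eq_univ] at hs
  rw [hmax, hs]

lemma sumLargest_le_sum (hf : ∀ i, 0 ≤ f i) : sumLargest k f ≤ ∑ i, f i := by
  obtain ⟨s, -, hmax⟩ := exists_sumLargest_eq_sum k f
  rw [hmax]
  exact sum_le_univ_sum_of_nonneg hf

lemma sumLargest_add_two_add_sumLargest_le (f : ι → ℝ) (hk : k + 2 ≤ Fintype.card ι) :
    sumLargest (k + 2) f + sumLargest k f ≤ 2 * sumLargest (k + 1) f := by
  classical
  obtain ⟨s, hs, hsmax⟩ := exists_sumLargest_eq_sum (k + 2) f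
  obtain ⟨t, ht, htmax⟩ := exists_sumLargest_eq_sum k f
  obtain ⟨i, his, hit⟩ : ∃ i ∈ s, i ∉ t := exists_mem_notMem_of_card_lt_card (by omega)
  have herase : ∑ j ∈ s.erase i, f j ≤ sumLargest (k + 1) f :=
    sum_le_sumLargest (by rw [card_erase_of_mem his]; omega)
  have hinsert : ∑ j ∈ insert i t, f j ≤ sumLargest (k + 1) f :=
    sum_le_sumLargest (by rw [card_insert_of_notMem hit]; omega)
  calc sumLargest (k + 2) f + sumLargest k f
      = ∑ j ∈ s.erase i, f j + ∑ j ∈ insert i t, f j := by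
        rw [hsmax, htmax, ← sum_erase_add s f his, sum_insert hit, add_assoc]
    _ ≤ 2 * sumLargest (k + 1) f := by linarith

end SumLargest

section SumKEig

variable {V : Type*} [Fintype V] [DecidableEq V] {k : ℕ} {A : Matrix V V ℝ}

lemma sumKEig_nonneg (hA : A.IsHermitian) (htrace : 0 ≤ A.trace) : 0 ≤ sumKEig k A hA :=
  sumLargest_nonneg (hA.trace_eq_sum_eigenvalues ▸ htrace)

lemma sumKEig_zero (hA : A.IsHermitian) : sumKEig 0 A hA = 0 :=
  sumLargest_zero _

lemma sumKEig_of_card_le (hA : A.IsHermitian) (hk : Fintype.card V ≤ k) :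
    sumKEig k A hA = A.trace :=
  (sumLargest_of_card_le hk).trans hA.trace_eq_sum_eigenvalues.symm

lemma sumKEig_le_trace (hA : A.PosSemidef) : sumKEig k A hA.isHermitian ≤ A.trace :=
  (sumLargest_le_sum hA.eigenvalues_nonneg).trans_eq
    hA.isHermitian.trace_eq_sum_eigenvalues.symm

lemma sumKEig_add_two_add_sumKEig_le (hA : A.IsHermitian) (hk : k + 2 ≤ Fintype.card V) :
    sumKEig (k + 2) A hA + sumKEig k A hA ≤ 2 * sumKEig (k + 1) A hA :=
  sumLargest_add_two_add_sumLargest_le _ hk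

end SumKEig

section FeasibleMatrices

variable {V : Type*} {G : SimpleGraph V} {A : Matrix V V ℝ}

/-- The set `𝒜(G)` of real symmetric matrices whose entries are `1` off the edges of `G`, over
which `gtheta` takes its infimum. Symmetry is expressed by `Matrix.IsHermitian`, as in
`gtheta`. -/
def feasibleMatrices (G : SimpleGraph V) : Set (Matrix V V ℝ) :=
  {A | A.IsHermitian ∧ ∀ i j, ¬ G.Adj i j → A i j = 1}

lemma posSemidef_vecMulVec_one_one [Finite V] :
    (Matrix.vecMulVec 1 1 : Matrix V V ℝ).PosSemidef := by
  simpa using Matrix.posSemidef_vecMulVec_self_star (1 : V → ℝ)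

lemma vecMulVec_one_one_mem_feasibleMatrices (G : SimpleGraph V) :
    Matrix.vecMulVec 1 1 ∈ feasibleMatrices G :=
  ⟨.ext fun i j => by simp [Matrix.vecMulVec_apply], fun i j _ => by simp [Matrix.vecMulVec_apply]⟩

lemma trace_eq_card_of_mem_feasibleMatrices [Fintype V]
    (hA : A ∈ feasibleMatrices G) : A.trace = Fintype.card V := by
  simp [Matrix.trace, hA.2 _ _ G.irrefl]

end FeasibleMatrices

section Gtheta

variable {V : Type*} [Fintype V] [DecidableEq V] {k : ℕ} {G : SimpleGraph V} {A : Matrix V V ℝ}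

lemma gtheta_le_sumKEig (hA : A ∈ feasibleMatrices G) : gtheta k G ≤ sumKEig k A hA.1 := by
  refine csInf_le ⟨0, ?_⟩ ⟨A, hA.1, hA.2, rfl⟩
  rintro x ⟨B, hB, hBG, rfl⟩
  refine sumKEig_nonneg hB ?_
  rw [trace_eq_card_of_mem_feasibleMatrices ⟨hB, hBG⟩]
  exact Nat.cast_nonneg _

lemma le_gtheta {c : ℝ}
    (h : ∀ (A : Matrix V V ℝ) (hA : A ∈ feasibleMatrices G), c ≤ sumKEig k A hA.1) :
    c ≤ gtheta k G := by
  have hJ := vecMulVec_one_one_mem_feasibleMatrices G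
  refine le_csInf ⟨_, _, hJ.1, hJ.2, rfl⟩ ?_
  rintro x ⟨A, hA, hAG, rfl⟩
  exact h A ⟨hA, hAG⟩

lemma gtheta_zero_nonneg (G : SimpleGraph V) : 0 ≤ gtheta 0 G :=
  le_gtheta fun _ hA => (sumKEig_zero hA.1).ge

lemma gtheta_le_card (k : ℕ) (G : SimpleGraph V) : gtheta k G ≤ Fintype.card V := by
  have hJ := vecMulVec_one_one_mem_feasibleMatrices G
  calc gtheta k G ≤ sumKEig k _ hJ.1 := gtheta_le_sumKEig hJ
    _ ≤ Matrix.trace _ := sumKEig_le_trace posSemidef_vecMulVec_one_one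
    _ = Fintype.card V := trace_eq_card_of_mem_feasibleMatrices hJ

lemma gtheta_of_card_le (G : SimpleGraph V) (hk : Fintype.card V ≤ k) :
    gtheta k G = Fintype.card V :=
  (gtheta_le_card k G).antisymm <| le_gtheta fun _ hA =>
    (trace_eq_card_of_mem_feasibleMatrices hA).symm.trans (sumKEig_of_card_le hA.1 hk).symm |>.le

lemma gtheta_add_two_add_gtheta_le (k : ℕ) (G : SimpleGraph V) :
    gtheta (k + 2) G + gtheta k G ≤ 2 * gtheta (k + 1) G := by
  rcases le_or_gt (k + 2) (Fintype.card V) with hk | hk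
  · suffices (gtheta (k + 2) G + gtheta k G) / 2 ≤ gtheta (k + 1) G by linarith
    refine le_gtheta fun A hA => ?_
    linarith [sumKEig_add_two_add_sumKEig_le hA.1 hk,
      gtheta_le_sumKEig (k := k + 2) hA, gtheta_le_sumKEig (k := k) hA]
  · rw [gtheta_of_card_le G (k := k + 2) (by omega), gtheta_of_card_le G (k := k + 1) (by omega)]
    linarith [gtheta_le_card k G]

end Gtheta

theorem stmt_2 {V : Type*} [Fintype V] [DecidableEq V] (G : SimpleGraph V) :
    (∀ k : ℕ, 2 ≤ k →
      gtheta (k + 1) G - gtheta k G ≤ gtheta k G - gtheta (k - 1) G) ∧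
    gtheta 2 G - gtheta 1 G ≤ gtheta 1 G := by
  constructor
  · intro k hk
    obtain ⟨m, rfl⟩ : ∃ m, k = m + 1 := ⟨k - 1, by omega⟩
    rw [Nat.add_sub_cancel]
    linarith [gtheta_add_two_add_gtheta_le m G]
  · linarith [gtheta_add_two_add_gtheta_le 0 G, gtheta_zero_nonneg G]
end

section
/- For the complete graph K_n and every k with 1 ≤ k ≤ n, ϑ_k(K_n) = k. -/
open Finset

/-!
A matrix with unit diagonal has trace `n`, so its eigenvalues average to `1` and the `k` largest of
them average to at least `1`. For the complete graph only the diagonal is prescribed, so the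
identity matrix is admissible, and it attains this bound.
-/

theorem exists_subset_card_eq_nsmul_sum_le {ι M : Type*} [AddCommMonoid M] [LinearOrder M]
    [IsOrderedAddMonoid M] (f : ι → M) {k : ℕ} {t : Finset ι} (hk : k ≤ #t) :
    ∃ s ⊆ t, #s = k ∧ k • ∑ i ∈ t, f i ≤ #t • ∑ i ∈ s, f i := by
  classical
  generalize hm : #t = m at hk ⊢
  induction m, hk using Nat.le_induction generalizing t with
  | base => exact ⟨t, Subset.rfl, hm, le_rfl⟩
  | succ m _ ih =>
    -- Discarding the smallest value does not lower the average.
    obtain ⟨a, ha, hmin⟩ := t.exists_min_image f (card_pos.1 (by lia))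
    have hcard : #(t.erase a) = m := by rw [card_erase_of_mem ha, hm, Nat.add_sub_cancel]
    obtain ⟨s, hst, hs, hle⟩ := ih hcard
    have hst' : s ⊆ t := hst.trans (t.erase_subset a)
    have hmin_le : k • f a ≤ ∑ i ∈ s, f i :=
      hs ▸ card_nsmul_le_sum s f (f a) fun i hi ↦ hmin i (hst' hi)
    refine ⟨s, hst', hs, ?_⟩
    calc k • ∑ i ∈ t, f i
        = k • ∑ i ∈ t.erase a, f i + k • f a := by rw [← sum_erase_add t f ha, nsmul_add]
      _ ≤ m • ∑ i ∈ s, f i + ∑ i ∈ s, f i := add_le_add hle hmin_le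
      _ = (m + 1) • ∑ i ∈ s, f i := (succ_nsmul _ m).symm

theorem eigenvalues_one {𝕜 V : Type*} [RCLike 𝕜] [Fintype V] [DecidableEq V]
    (h : (1 : Matrix V V 𝕜).IsHermitian) (i : V) : h.eigenvalues i = 1 := by
  have : Nonempty V := ⟨i⟩
  simpa only [spectrum.one_eq, Set.mem_singleton_iff] using h.eigenvalues_mem_spectrum_real i

section sumKEig

variable {V : Type*} [Fintype V] [DecidableEq V] {k : ℕ} {A : Matrix V V ℝ}

theorem sum_eigenvalues_le_sumKEig (hA : A.IsHermitian) {s : Finset V}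
    (hs : #s = min k (Fintype.card V)) : ∑ i ∈ s, hA.eigenvalues i ≤ sumKEig k A hA := by
  refine le_csSup (Set.Finite.bddAbove ?_) ⟨s, hs, rfl⟩
  refine (Set.finite_range fun s : Finset V ↦ ∑ i ∈ s, hA.eigenvalues i).subset ?_
  rintro _ ⟨s, -, rfl⟩
  exact ⟨s, rfl⟩

theorem mul_trace_le_card_mul_sumKEig (hA : A.IsHermitian) (hk : k ≤ Fintype.card V) :
    k * A.trace ≤ Fintype.card V * sumKEig k A hA := by
  obtain ⟨s, -, hs, hle⟩ := exists_subset_card_eq_nsmul_sum_le hA.eigenvalues (t := univ) hk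
  calc k * A.trace
      = k • ∑ i, hA.eigenvalues i := by simp [hA.trace_eq_sum_eigenvalues]
    _ ≤ Fintype.card V • ∑ i ∈ s, hA.eigenvalues i := hle
    _ ≤ Fintype.card V • sumKEig k A hA :=
        nsmul_le_nsmul_right (sum_eigenvalues_le_sumKEig hA (by rw [hs, min_eq_left hk])) _
    _ = Fintype.card V * sumKEig k A hA := nsmul_eq_mul _ _

theorem sumKEig_of_eigenvalues_eq (hA : A.IsHermitian) {c : ℝ} (hc : ∀ i, hA.eigenvalues i = c)
    (hk : k ≤ Fintype.card V) : sumKEig k A hA = k * c := by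
  have hsum {s : Finset V} (hs : #s = k) : ∑ i ∈ s, hA.eigenvalues i = k * c := by simp [hc, hs]
  obtain ⟨s, -, hs⟩ := exists_subset_card_eq (s := (univ : Finset V)) hk
  refine IsGreatest.csSup_eq ⟨⟨s, by rw [hs, min_eq_left hk], (hsum hs).symm⟩, ?_⟩
  rintro _ ⟨t, ht, rfl⟩
  exact (hsum (ht.trans (min_eq_left hk))).le

theorem sumKEig_one (h : (1 : Matrix V V ℝ).IsHermitian) (hk : k ≤ Fintype.card V) :
    sumKEig k 1 h = k := by
  rw [sumKEig_of_eigenvalues_eq h (eigenvalues_one h) hk, mul_one]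

theorem le_sumKEig_of_diag_eq_one (hA : A.IsHermitian) (hdiag : ∀ i, A i i = 1)
    (hk : k ≤ Fintype.card V) : k ≤ sumKEig k A hA := by
  cases isEmpty_or_nonempty V with
  | inl _ => rw [sumKEig_of_eigenvalues_eq hA (c := 1) isEmptyElim hk, mul_one]
  | inr _ =>
    have htrace : A.trace = Fintype.card V := by simp [Matrix.trace, hdiag]
    have hcard : (0 : ℝ) < Fintype.card V := mod_cast Fintype.card_pos
    have hle := mul_trace_le_card_mul_sumKEig hA hk
    rw [htrace, mul_comm] at hle
    exact le_of_mul_le_mul_left hle hcard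

end sumKEig

theorem stmt_6_general {V : Type*} [Fintype V] [DecidableEq V] {k : ℕ}
    (hk : k ≤ Fintype.card V) : gtheta k (⊤ : SimpleGraph V) = k := by
  refine IsLeast.csInf_eq ⟨⟨1, Matrix.isHermitian_one, ?_, (sumKEig_one _ hk).symm⟩, ?_⟩
  · intro i j hij
    obtain rfl : i = j := by simpa using hij
    exact Matrix.one_apply_eq i
  · rintro _ ⟨A, hA, hadm, rfl⟩
    exact le_sumKEig_of_diag_eq_one hA (fun i ↦ hadm i i (SimpleGraph.irrefl _)) hk

theorem stmt_6 (n k : ℕ) (hk1 : 1 ≤ k) (hkn : k ≤ n) :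
    gtheta k (⊤ : SimpleGraph (Fin n)) = (k : ℝ) :=
  stmt_6_general (by rwa [Fintype.card_fin])
end
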